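/- arXiv:1004.5239 — 3 statements merged into one kernel-verified Lean document; each statement's English description precedes it below -/
import Mathlib

section
/- Let K be a field of characteristic 0 and let UT_n be the group of n x n upper triangular matrices over K with all diagonal entries equal to 1. For any matrices A_1, ..., A_m, B in UT_n, the equation (A_1 X)(A_2 X)...(A_m X) = B has a unique solution X in UT_n. In particular, UT_n is a uniquely divisible group. -/
/-- A matrix is *unipotent* if it is upper triangular with all diagonal entries 1. -/
def Unipotent {K : Type*} [Field K] {n : ℕ} (M : Matrix (Fin n) (Fin n) K) : Prop :=
  (∀ i j : Fin n, j < i → M i j = 0) ∧ ∀ i : Fin n, M i i = 1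

/-- `M` vanishes below the `d`-th superdiagonal. -/
def ZBelow {K : Type*} [Field K] {n : ℕ} (d : ℕ) (M : Matrix (Fin n) (Fin n) K) : Prop :=
  ∀ i j : Fin n, (j : ℕ) < i + d → M i j = 0

section helpers

variable {K : Type*} [Field K] {n : ℕ}

theorem ZBelow.add {d : ℕ} {M N : Matrix (Fin n) (Fin n) K} (hM : ZBelow d M)
    (hN : ZBelow d N) : ZBelow d (M + N) := by
  intro i j h
  simp [hM i j h, hN i j h]

theorem ZBelow.sub {d : ℕ} {M N : Matrix (Fin n) (Fin n) K} (hM : ZBelow d M)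
    (hN : ZBelow d N) : ZBelow d (M - N) := by
  intro i j h
  simp [hM i j h, hN i j h]

theorem ZBelow.smul {d : ℕ} {M : Matrix (Fin n) (Fin n) K} (c : K) (hM : ZBelow d M) :
    ZBelow d (c • M) := by
  intro i j h
  simp [hM i j h]

theorem ZBelow.mono {d e : ℕ} {M : Matrix (Fin n) (Fin n) K} (hM : ZBelow d M)
    (h : e ≤ d) : ZBelow e M := fun i j hij => hM i j (by omega)

theorem ZBelow.mul {d e : ℕ} {M N : Matrix (Fin n) (Fin n) K} (hM : ZBelow d M)
    (hN : ZBelow e N) : ZBelow (d + e) (M * N) := by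
  intro i j h
  rw [Matrix.mul_apply]
  refine Finset.sum_eq_zero fun k _ => ?_
  by_cases hk : (k : ℕ) < i + d
  · rw [hM i k hk, zero_mul]
  · rw [hN k j (by omega), mul_zero]

theorem ZBelow.eq_zero {M : Matrix (Fin n) (Fin n) K} (hM : ZBelow n M) : M = 0 := by
  ext i j
  exact hM i j (by omega)

theorem unipotent_iff (M : Matrix (Fin n) (Fin n) K) : Unipotent M ↔ ZBelow 1 (M - 1) := by
  constructor
  · rintro ⟨h1, h2⟩ i j h
    rcases eq_or_ne i j with rfl | hne
    · simp [h2]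
    · have : j < i := by
        rw [Fin.lt_def]
        have := Fin.val_ne_of_ne hne
        omega
      simp [h1 i j this, Matrix.one_apply_ne hne]
  · intro h
    refine ⟨fun i j hij => ?_, fun i => ?_⟩
    · have := h i j (by rw [Fin.lt_def] at hij; omega)
      simpa [Matrix.one_apply_ne hij.ne'] using this
    · have := h i i (by omega)
      simpa [sub_eq_zero] using this

theorem Unipotent.one' : Unipotent (1 : Matrix (Fin n) (Fin n) K) := by
  rw [unipotent_iff, sub_self]
  intro i j _
  rfl

theorem Unipotent.zl {d : ℕ} {U M : Matrix (Fin n) (Fin n) K} (hU : Unipotent U)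
    (hM : ZBelow d M) : ZBelow (d + 1) (U * M - M) := by
  have := ((unipotent_iff U).1 hU).mul hM
  rw [sub_mul, one_mul, add_comm] at this
  exact this

theorem Unipotent.zr {d : ℕ} {U M : Matrix (Fin n) (Fin n) K} (hU : Unipotent U)
    (hM : ZBelow d M) : ZBelow (d + 1) (M * U - M) := by
  have := hM.mul ((unipotent_iff U).1 hU)
  rw [mul_sub, mul_one] at this
  exact this

theorem Unipotent.mul' {U V : Matrix (Fin n) (Fin n) K} (hU : Unipotent U)
    (hV : Unipotent V) : Unipotent (U * V) := by
  have hU' := (unipotent_iff U).1 hU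
  have hV' := (unipotent_iff V).1 hV
  rw [unipotent_iff]
  have := ((hU.zl hV').mono (Nat.le_succ 1)).add (hU'.add hV')
  convert this using 1
  noncomm_ring

/-- The word `(A_1 X) ⋯ (A_m X)`. -/
def wordProd (L : List (Matrix (Fin n) (Fin n) K)) (X : Matrix (Fin n) (Fin n) K) :
    Matrix (Fin n) (Fin n) K := (L.map fun A => A * X).prod

theorem wordProd_unipotent (L : List (Matrix (Fin n) (Fin n) K)) (hL : ∀ A ∈ L, Unipotent A)
    {X : Matrix (Fin n) (Fin n) K} (hX : Unipotent X) : Unipotent (wordProd L X) := by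
  induction L with
  | nil => simpa [wordProd] using Unipotent.one'
  | cons A L ih =>
    have := ih fun B hB => hL B (List.mem_cons_of_mem _ hB)
    exact ((hL A List.mem_cons_self).mul' hX).mul' this

theorem wordProd_diff (L : List (Matrix (Fin n) (Fin n) K)) (hL : ∀ A ∈ L, Unipotent A)
    {X Y : Matrix (Fin n) (Fin n) K} (hX : Unipotent X) (hY : Unipotent Y) {d : ℕ}
    (h : ZBelow d (X - Y)) :
    ZBelow (d + 1) (wordProd L X - wordProd L Y - (L.length : K) • (X - Y)) := by
  induction L with
  | nil =>
    intro i j _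
    simp [wordProd]
  | cons A L ih =>
    have hL' : ∀ B ∈ L, Unipotent B := fun B hB => hL B (List.mem_cons_of_mem _ hB)
    have ih := ih hL'
    have hA := hL A List.mem_cons_self
    have hPd : ZBelow d (wordProd L X - wordProd L Y) := by
      have := (ih.mono (Nat.le_succ d)).add (h.smul (L.length : K))
      simpa using this
    have e1 := (hA.mul' hX).zl hPd
    have e2 := hA.zl h
    have e3 := (wordProd_unipotent L hL' hY).zr
      ((e2.mono (Nat.le_succ d)).add h)
    have := ((e1.add e2).add e3).add ih
    convert this using 1
    have c : ∀ Z, wordProd (A :: L) Z = A * Z * wordProd L Z := fun Z => by simp [wordProd]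
    rw [c, c, List.length_cons, Nat.cast_succ, add_smul, one_smul]
    generalize (L.length : K) • (X - Y) = W
    noncomm_ring

theorem wordProd_existsUnique [CharZero K] (L : List (Matrix (Fin n) (Fin n) K))
    (hL : ∀ A ∈ L, Unipotent A) (hl : 0 < L.length) {B : Matrix (Fin n) (Fin n) K}
    (hB : Unipotent B) :
    ∃! X : Matrix (Fin n) (Fin n) K, Unipotent X ∧ wordProd L X = B := by
  have hc : (L.length : K) ≠ 0 := Nat.cast_ne_zero.2 hl.ne'
  have hsub : ∀ {U V : Matrix (Fin n) (Fin n) K}, Unipotent U → Unipotent V →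
      ZBelow 1 (U - V) := by
    intro U V hU hV
    have := ((unipotent_iff U).1 hU).sub ((unipotent_iff V).1 hV)
    simpa using this
  have ex : ∀ d : ℕ, ∃ X : Matrix (Fin n) (Fin n) K, Unipotent X ∧
      ZBelow (d + 1) (wordProd L X - B) := by
    intro d
    induction d with
    | zero => exact ⟨1, Unipotent.one', hsub (wordProd_unipotent L hL Unipotent.one') hB⟩
    | succ d ih =>
      obtain ⟨X, hX, h⟩ := ih
      have hd : ZBelow (d + 1) ((-(L.length : K)⁻¹) • (wordProd L X - B)) := h.smul _
      have hX' : Unipotent (X + (-(L.length : K)⁻¹) • (wordProd L X - B)) := by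
        rw [unipotent_iff]
        have := ((unipotent_iff X).1 hX).add (hd.mono (Nat.le_add_left 1 d))
        convert this using 1
        abel
      refine ⟨_, hX', ?_⟩
      have := wordProd_diff L hL hX' hX (d := d + 1) (by simpa using hd)
      convert this using 1
      rw [add_sub_cancel_left, smul_smul, mul_neg, mul_inv_cancel₀ hc, neg_one_smul]
      abel
  obtain ⟨X, hX, h⟩ := ex n
  have hXB : wordProd L X = B := sub_eq_zero.1 (h.mono (Nat.le_succ n)).eq_zero
  refine ⟨X, ⟨hX, hXB⟩, ?_⟩
  rintro Y ⟨hY, hYB⟩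
  have un : ∀ d : ℕ, ZBelow (d + 1) (Y - X) := by
    intro d
    induction d with
    | zero => exact hsub hY hX
    | succ d ih =>
      have := (wordProd_diff L hL hY hX ih).smul (-(L.length : K)⁻¹)
      rw [hYB, hXB, sub_self, zero_sub, smul_neg, neg_smul, neg_neg, smul_smul,
        inv_mul_cancel₀ hc, one_smul] at this
      exact this
  exact sub_eq_zero.1 ((un n).mono (Nat.le_succ n)).eq_zero

end helpers

/-- Over a field `K` of characteristic 0, for unipotent `A_1, …, A_m, B` (`m ≥ 1`),
the equation `(A_1 X)(A_2 X) ⋯ (A_m X) = B` has a unique unipotent solution `X`;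
in particular, the unipotent group `UT_n` is uniquely divisible. -/
theorem stmt14 (K : Type*) [Field K] [CharZero K] (n m : ℕ) (hm : 0 < m)
    (A : Fin m → Matrix (Fin n) (Fin n) K) (B : Matrix (Fin n) (Fin n) K)
    (hA : ∀ i, Unipotent (A i)) (hB : Unipotent B) :
    (∃! X : Matrix (Fin n) (Fin n) K,
        Unipotent X ∧ (List.ofFn fun i : Fin m => A i * X).prod = B) ∧
      ∀ k : ℕ, 0 < k →
        ∃! X : Matrix (Fin n) (Fin n) K, Unipotent X ∧ X ^ k = B := by
  refine ⟨?_, fun k hk => ?_⟩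
  · have := wordProd_existsUnique (List.ofFn A) (by simpa [List.mem_ofFn] using hA)
      (by simpa using hm) hB
    simpa only [wordProd, List.map_ofFn, Function.comp_def] using this
  · have := wordProd_existsUnique (List.replicate k (1 : Matrix (Fin n) (Fin n) K))
      (fun M hM => by rw [List.eq_of_mem_replicate hM]; exact Unipotent.one')
      (by simpa using hk) hB
    simpa only [wordProd, List.map_replicate, List.prod_replicate, one_mul] using this
end

section
/- Let (G_i)_{i >= 1} be a sequence of finite groups with the property that for every positive integer m, the integers m and |G_i| are relatively prime for all but finitely many i. Then the quotient of the direct product of the G_i by their direct sum (the normal subgroup of sequences with all but finitely many entries equal to the identity) is a uniquely divisible group. -/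
/-- A group is *uniquely divisible* if every element has a unique `m`-th root
for each positive integer `m`. -/
def UniquelyDivisible (G : Type*) [Group G] : Prop :=
  ∀ (b : G) (m : ℕ), 0 < m → ∃! x : G, x ^ m = b

/-- The "direct sum" of a family of groups, as a subgroup of the direct product:
the sequences with all but finitely many entries equal to the identity. -/
def directSumSubgroup (G : ℕ → Type*) [∀ i, Group (G i)] : Subgroup (∀ i, G i) where
  carrier := {f | {i | f i ≠ 1}.Finite}
  one_mem' := by
    simp
  mul_mem' := by
    intro f g hf hg
    apply (Set.Finite.union hf hg).subset
    intro i hi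
    simp only [Set.mem_setOf_eq, Set.mem_union] at hi ⊢
    by_contra h
    push_neg at h
    exact hi (by simp [Pi.mul_apply, h.1, h.2])
  inv_mem' := by
    intro f hf
    apply hf.subset
    intro i hi
    simp only [Set.mem_setOf_eq] at hi ⊢
    intro h
    exact hi (by simp [Pi.inv_apply, h])

instance directSumSubgroup_normal (G : ℕ → Type*) [∀ i, Group (G i)] :
    (directSumSubgroup G).Normal := by
  constructor
  intro f hf g
  apply Set.Finite.subset hf
  intro i hi
  simp only [Set.mem_setOf_eq] at hi ⊢
  intro h
  exact hi (by simp [Pi.mul_apply, Pi.inv_apply, h])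

/-- If `(G_i)` is a sequence of finite groups such that for every positive integer `m`,
`m` is coprime to `#G_i` for all but finitely many `i`, then the quotient of the direct
product of the `G_i` by their direct sum is uniquely divisible. -/
theorem stmt15 (G : ℕ → Type) [∀ i, Group (G i)] [∀ i, Finite (G i)]
    (h : ∀ m : ℕ, 0 < m → {i : ℕ | ¬ Nat.Coprime m (Nat.card (G i))}.Finite) :
    UniquelyDivisible ((∀ i, G i) ⧸ directSumSubgroup G) := by
  have key : ∀ a b : (∀ i, G i), ((a : (∀ i, G i) ⧸ directSumSubgroup G) = b) ↔
      {i | a i ≠ b i}.Finite := by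
    intro a b
    rw [QuotientGroup.eq]
    have e : {i | (a⁻¹ * b) i ≠ 1} = {i | a i ≠ b i} := by
      ext i
      simp [inv_mul_eq_one]
    rw [← e]
    exact Iff.rfl
  intro b m hm
  have hfin := h m hm
  have hbij : ∀ i, Nat.Coprime m (Nat.card (G i)) →
      Function.Bijective (fun x : G i => x ^ m) :=
    fun i hi => (powCoprime hi.symm).bijective
  induction b using QuotientGroup.induction_on with
  | H b =>
    have hex : ∀ i, ∃ x : G i, Nat.Coprime m (Nat.card (G i)) → x ^ m = b i := by
      intro i
      by_cases hi : Nat.Coprime m (Nat.card (G i))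
      · obtain ⟨x, hx⟩ := (hbij i hi).2 (b i)
        exact ⟨x, fun _ => hx⟩
      · exact ⟨1, fun h' => absurd h' hi⟩
    choose x hx using hex
    refine ⟨(x : (∀ i, G i) ⧸ directSumSubgroup G), ?_, ?_⟩
    · change ((x ^ m : ∀ i, G i) : (∀ i, G i) ⧸ directSumSubgroup G) = b
      rw [key]
      refine hfin.subset ?_
      intro i hi hc
      exact hi (hx i hc)
    · intro y hy
      induction y using QuotientGroup.induction_on with
      | H y =>
        change ((y ^ m : ∀ i, G i) : (∀ i, G i) ⧸ directSumSubgroup G) = b at hy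
        rw [key] at hy ⊢
        refine (hfin.union hy).subset ?_
        intro i hi
        by_contra hc
        simp only [Set.mem_union, Set.mem_setOf_eq, not_or, not_not] at hc
        exact hi ((hbij i hc.1).1 (hc.2.trans (hx i hc.1).symm))
end

section
/- Let k >= 1 and let n_0, ..., n_k be positive integers. The following are equivalent: (1) for every uniquely divisible group G and all elements A_1, ..., A_k, B in G, the equation X^{n_0} A_1 X^{n_1} A_2 ... X^{n_{k-1}} A_k X^{n_k} = B has a solution X in G; (2) k = 1 and n_0 = n_1. -/
open Polynomial in
lemma aux_deg (a b : ℕ) (h : a ≤ b) :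
    (∑ i ∈ Finset.range a, (X : ℂ[X]) ^ i).degree < b := by
  rw [← Polynomial.mem_degreeLT]
  refine Submodule.sum_mem _ fun i hi => ?_
  rw [Polynomial.mem_degreeLT, degree_X_pow]
  have := Finset.mem_range.1 hi
  exact_mod_cast (by omega : i < b)

open Polynomial in
lemma aux_root_lt (p q : ℕ) (hp : 0 < p) (h : p < q) :
    ∃ x : ℂ, ‖x‖ ≠ 1 ∧
      ∑ i ∈ Finset.range p, x ^ i + ∑ i ∈ Finset.range q, x ^ i = 0 := by
  obtain ⟨r, rfl⟩ : ∃ r, q = r + 1 := ⟨q - 1, by omega⟩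
  set f : ℂ[X] := X ^ r +
    (∑ i ∈ Finset.range p, X ^ i + ∑ i ∈ Finset.range r, X ^ i) with hf
  have hm : f.Monic := by
    apply monic_X_pow_add
    refine lt_of_le_of_lt (degree_add_le _ _) (max_lt ?_ ?_)
    · exact aux_deg _ _ (by omega)
    · exact aux_deg _ _ le_rfl
  have hev : ∀ x : ℂ, f.eval x =
      ∑ i ∈ Finset.range p, x ^ i + ∑ i ∈ Finset.range (r + 1), x ^ i := by
    intro x
    simp [hf, eval_finsetSum, Finset.sum_range_succ]
    ring
  have h0 : f.coeff 0 = 2 := by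
    rw [coeff_zero_eq_eval_zero, hev]
    obtain ⟨s, rfl⟩ : ∃ s, p = s + 1 := ⟨p - 1, by omega⟩
    simp [Finset.sum_range_succ']
    norm_num
  have hprod := (IsAlgClosed.splits f).coeff_zero_eq_prod_roots_of_monic hm
  by_contra! hc
  have hall : ∀ y ∈ f.roots, ‖y‖ = 1 := by
    intro y hy
    by_contra hne
    have h1 := hc y hne
    rw [← hev] at h1
    exact h1 ((mem_roots hm.ne_zero).1 hy)
  have hn : ∀ s : Multiset ℂ, (∀ y ∈ s, ‖y‖ = 1) → ‖s.prod‖ = 1 := by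
    intro s
    induction s using Multiset.induction with
    | empty => simp
    | cons a s ih =>
      intro h
      rw [Multiset.prod_cons, norm_mul, h a (by simp),
        ih fun y hy => h y (by simp [hy]), one_mul]
  have h2 := congrArg norm hprod
  rw [h0, norm_mul, hn _ hall] at h2
  simp at h2

lemma aux_root (p q : ℕ) (hp : 0 < p) (hq : 0 < q) (h : p ≠ q) :
    ∃ c : ℂ, c.re ≠ 0 ∧
      ∑ i ∈ Finset.range p, Complex.exp c ^ i +
        ∑ i ∈ Finset.range q, Complex.exp c ^ i = 0 := by
  obtain ⟨x, hx, hs⟩ : ∃ x : ℂ, ‖x‖ ≠ 1 ∧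
      ∑ i ∈ Finset.range p, x ^ i + ∑ i ∈ Finset.range q, x ^ i = 0 := by
    rcases lt_or_gt_of_ne h with h | h
    · exact aux_root_lt p q hp h
    · obtain ⟨x, hx, hs⟩ := aux_root_lt q p hq h
      exact ⟨x, hx, by rw [add_comm]; exact hs⟩
  have hx0 : x ≠ 0 := by
    rintro rfl
    obtain ⟨s, rfl⟩ : ∃ s, p = s + 1 := ⟨p - 1, by omega⟩
    obtain ⟨t, rfl⟩ : ∃ s, q = s + 1 := ⟨q - 1, by omega⟩
    simp [Finset.sum_range_succ'] at hs
  refine ⟨Complex.log x, ?_, by rw [Complex.exp_log hx0]; exact hs⟩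
  intro h0
  apply hx
  rw [← Complex.exp_log hx0, Complex.norm_exp, h0, Real.exp_zero]

/-- The semidirect product of `ℂ` by `ℚ`, where `t` acts as multiplication by `exp (t c)`. -/
@[ext] structure SG (c : ℂ) : Type u where
  m : ℂ
  t : ℚ

namespace SG

variable {c : ℂ}

noncomputable instance : Mul (SG c) :=
  ⟨fun a b => ⟨a.m + Complex.exp (a.t * c) * b.m, a.t + b.t⟩⟩
instance : One (SG c) := ⟨⟨0, 0⟩⟩
noncomputable instance : Inv (SG c) :=
  ⟨fun a => ⟨-(Complex.exp (-(a.t * c)) * a.m), -a.t⟩⟩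

@[simp] lemma mul_m (a b : SG c) : (a * b).m = a.m + Complex.exp (a.t * c) * b.m := rfl
@[simp] lemma mul_t (a b : SG c) : (a * b).t = a.t + b.t := rfl
@[simp] lemma one_m : (1 : SG c).m = 0 := rfl
@[simp] lemma one_t : (1 : SG c).t = 0 := rfl
@[simp] lemma inv_m (a : SG c) : (a⁻¹).m = -(Complex.exp (-(a.t * c)) * a.m) := rfl
@[simp] lemma inv_t (a : SG c) : (a⁻¹).t = -a.t := rfl

noncomputable instance : Group (SG c) :=
  Group.ofLeftAxioms
    (by
      intro a b d
      ext
      · simp [add_mul, Complex.exp_add]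
        ring
      · simp [add_assoc])
    (by intro a; ext <;> simp)
    (by intro a; ext <;> simp)

lemma pow_t (a : SG c) (n : ℕ) : (a ^ n).t = n * a.t := by
  induction n with
  | zero => simp
  | succ n ih => rw [pow_succ, mul_t, ih]; push_cast; ring

lemma pow_m (a : SG c) (n : ℕ) :
    (a ^ n).m = (∑ i ∈ Finset.range n, Complex.exp (a.t * c) ^ i) * a.m := by
  induction n with
  | zero => simp
  | succ n ih =>
    rw [pow_succ, mul_m, ih, pow_t, Finset.sum_range_succ, ← Complex.exp_nat_mul]
    push_cast
    rw [mul_assoc]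
    ring

lemma sum_ne (hc : c.re ≠ 0) (t : ℚ) (n : ℕ) (hn : 0 < n) :
    ∑ i ∈ Finset.range n, Complex.exp (t * c) ^ i ≠ 0 := by
  by_cases ht : t = 0
  · subst ht
    simp
    omega
  · intro h
    have h1 := geom_sum_mul (Complex.exp (t * c)) n
    rw [h, zero_mul, ← Complex.exp_nat_mul] at h1
    have h2 : Complex.exp (n * (t * c)) = 1 := (sub_eq_zero.1 h1.symm)
    have h3 := congrArg norm h2
    rw [Complex.norm_exp, norm_one, Real.exp_eq_one_iff] at h3
    have h4 : ((n : ℂ) * (t * c)).re = (n : ℝ) * ((t : ℝ) * c.re) := by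
      simp
    rw [h4] at h3
    have h5 : (n : ℝ) ≠ 0 := by positivity
    have h6 : (t : ℝ) ≠ 0 := by exact_mod_cast ht
    exact mul_ne_zero h5 (mul_ne_zero h6 hc) h3

lemma ud (hc : c.re ≠ 0) : UniquelyDivisible (SG.{u} c) := by
  intro b n hn
  have hn' : (n : ℚ) ≠ 0 := by positivity
  have hs := sum_ne hc (b.t / n) n hn
  refine ⟨⟨b.m / ∑ i ∈ Finset.range n, Complex.exp ((b.t / n : ℚ) * c) ^ i, b.t / n⟩, ?_, ?_⟩
  · ext
    · rw [pow_m]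
      exact mul_div_cancel₀ _ hs
    · rw [pow_t]
      exact mul_div_cancel₀ _ hn'
  · rintro y rfl
    have ht : (y ^ n).t / n = y.t := by
      rw [pow_t]; field_simp
    rw [ht] at hs ⊢
    ext
    · simp only [pow_m]
      field_simp
    · rfl

end SG

lemma aux_main (p q : ℕ) (hp : 0 < p) (hq : 0 < q)
    (H : ∀ (G : Type u) (_ : Group G), UniquelyDivisible G →
      ∀ A B : G, ∃ X : G, X ^ p * A * X ^ q = B) : p = q := by
  by_contra h
  obtain ⟨c, hc, hs⟩ := aux_root p q hp hq h
  obtain ⟨X, hX⟩ := H (SG.{u} c) inferInstance (SG.ud hc) ⟨0, -p⟩ ⟨1, q⟩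
  have h1 := congrArg SG.t hX
  have h2 := congrArg SG.m hX
  simp only [SG.mul_t, SG.mul_m, SG.pow_t, SG.pow_m] at h1 h2
  have hpq : (p : ℚ) + q ≠ 0 := by positivity
  have hx : X.t = 1 := by
    apply mul_left_cancel₀ hpq
    linarith
  rw [hx] at h2
  simp at h2
  rw [← add_mul, hs] at h2
  simp at h2

lemma aux_prod {G : Type*} [Group G] (X : G) (j : ℕ) (f : Fin j → ℕ) :
    (List.ofFn fun i => X ^ f i).prod = X ^ ∑ i, f i := by
  induction j with
  | zero => simp
  | succ j ih => rw [List.ofFn_succ, List.prod_cons, ih, Fin.sum_univ_succ, pow_add]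

/-- For `k ≥ 1` and positive integers `n_0, …, n_k`, the equation
`X^{n_0} A_1 X^{n_1} A_2 ⋯ X^{n_{k-1}} A_k X^{n_k} = B` has a solution in every
uniquely divisible group (for all choices of `A_1, …, A_k, B`) if and only if
`k = 1` and `n_0 = n_1`. -/
theorem stmt17 (k : ℕ) (hk : 1 ≤ k) (n : Fin (k + 1) → ℕ) (hn : ∀ i, 0 < n i) :
    (∀ (G : Type u) (_ : Group G), UniquelyDivisible G →
        ∀ (A : Fin k → G) (B : G),
          ∃ X : G,
            X ^ n 0 * (List.ofFn fun i : Fin k => A i * X ^ n i.succ).prod = B) ↔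
      (k = 1 ∧ n 0 = n 1) := by
  constructor
  · intro H
    obtain ⟨j, rfl⟩ : ∃ j, k = j + 1 := ⟨k - 1, by omega⟩
    have e1 : n 0 = n 1 + ∑ i : Fin j, n i.succ.succ := by
      apply aux_main.{u} _ _ (hn 0) (by have := hn 1; omega)
      intro G _ hG A B
      obtain ⟨X, hX⟩ := H G _ hG (Fin.cons A fun _ => 1) B
      refine ⟨X, ?_⟩
      rw [List.ofFn_succ, List.prod_cons] at hX
      simp only [Fin.cons_zero, Fin.cons_succ, one_mul] at hX
      rw [aux_prod X j fun i => n i.succ.succ] at hX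
      rw [← hX, pow_add]
      simp [mul_assoc]
    have e2 : n 0 + ∑ i : Fin j, n i.castSucc.succ = n (Fin.last j).succ := by
      apply aux_main.{u} _ _ (by have := hn 0; omega) (hn _)
      intro G _ hG A B
      obtain ⟨X, hX⟩ := H G _ hG (Fin.snoc (fun _ => 1) A) B
      refine ⟨X, ?_⟩
      rw [List.ofFn_succ', List.concat_eq_append, List.prod_append] at hX
      simp only [Fin.snoc_castSucc, Fin.snoc_last, one_mul, List.prod_singleton] at hX
      rw [aux_prod X j fun i => n i.castSucc.succ] at hX
      rw [← hX, pow_add]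
      simp [mul_assoc]
    rcases Nat.eq_zero_or_pos j with rfl | hj
    · exact ⟨rfl, by simpa using e1⟩
    · exfalso
      obtain ⟨l, rfl⟩ : ∃ l, j = l + 1 := ⟨j - 1, by omega⟩
      have h3 : n (Fin.last l).succ.succ ≤ ∑ i : Fin (l + 1), n i.succ.succ :=
        Finset.single_le_sum (f := fun i : Fin (l + 1) => n i.succ.succ)
          (fun _ _ => Nat.zero_le _) (Finset.mem_univ _)
      rw [Fin.succ_last] at h3
      simp only [Nat.succ_eq_add_one] at h3
      have := hn 1
      omega
  · rintro ⟨rfl, h⟩ G _ hG A B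
    obtain ⟨C, hC, -⟩ := hG (B * A 0) 2 (by norm_num)
    obtain ⟨X, hX, -⟩ := hG (C * (A 0)⁻¹) (n 0) (hn 0)
    refine ⟨X, ?_⟩
    have : n (Fin.succ 0) = n 0 := h.symm
    simp only [List.ofFn_succ, List.ofFn_zero, List.prod_cons, List.prod_nil, this]
    rw [hX, mul_one, ← mul_assoc, inv_mul_cancel_right, ← mul_assoc, ← pow_two, hC,
      mul_inv_cancel_right]
end
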